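/- For every γ ∈ (0, 1 − 2π⁻²] one has m_γ = 1. -/

import Mathlib

open MeasureTheory Set Real

noncomputable section

/-- Pairs `(y, y')` representing a function of Sobolev class `W¹₂[0,1]`:
`y` is absolutely continuous on `[0,1]` (being an integral of `y'`)
with derivative `y'` belonging to `L²[0,1]`. -/
def W12 : Set ((ℝ → ℝ) × (ℝ → ℝ)) :=
  {p | (∀ x ∈ Icc (0:ℝ) 1, p.1 x = p.1 0 + ∫ t in (0:ℝ)..x, p.2 t) ∧
    IntervalIntegrable p.2 volume 0 1 ∧
    IntervalIntegrable (fun t => (p.2 t) ^ 2) volume 0 1}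

/-- The Rayleigh quotient `(∫₀¹ ((y')² + q y²) dx) / (∫₀¹ y² dx)`. -/
def Rayleigh (q : ℝ → ℝ) (p : (ℝ → ℝ) × (ℝ → ℝ)) : ℝ :=
  (∫ t in (0:ℝ)..1, ((p.2 t) ^ 2 + q t * (p.1 t) ^ 2)) /
    ∫ t in (0:ℝ)..1, (p.1 t) ^ 2

/-- The smallest eigenvalue `λ₁(q)` of the Neumann problem `-y'' + q y = λ y`,
`y'(0) = y'(1) = 0`, defined as the infimum of Rayleigh quotients over
nonzero `y ∈ W¹₂[0,1]`. -/
def lambda1 (q : ℝ → ℝ) : ℝ :=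
  sInf {r | ∃ p ∈ W12, 0 < (∫ t in (0:ℝ)..1, (p.1 t) ^ 2) ∧ r = Rayleigh q p}

/-- The class `A_γ` of potentials: `q ∈ L¹[0,1]`, `q ≥ 0` a.e. on `[0,1]`,
`∫₀¹ q^γ dx = 1`. -/
def Agamma (γ : ℝ) : Set (ℝ → ℝ) :=
  {q | IntervalIntegrable q volume 0 1 ∧
    (∀ᵐ t ∂(volume.restrict (Icc (0:ℝ) 1)), 0 ≤ q t) ∧
    (∫ t in (0:ℝ)..1, q t ^ γ) = 1}

/-- `m_γ := inf_{q ∈ A_γ} λ₁(q)`. -/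
def mGamma (γ : ℝ) : ℝ := sInf (lambda1 '' Agamma γ)

/-- The set `M` of uniformly positive functions of class `W¹₂[0,1]`. -/
def Mset : Set ((ℝ → ℝ) × (ℝ → ℝ)) :=
  {p ∈ W12 | ∃ ζ > (0:ℝ), ∀ x ∈ Icc (0:ℝ) 1, ζ ≤ p.1 x}

/-- `J_γ(y) := ∫₀¹ (y')² dx + (∫₀¹ y^{2γ/(γ−1)} dx)^{(γ−1)/γ}`. -/
def Jg (γ : ℝ) (p : (ℝ → ℝ) × (ℝ → ℝ)) : ℝ :=
  (∫ t in (0:ℝ)..1, (p.2 t) ^ 2) +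
    (∫ t in (0:ℝ)..1, (p.1 t) ^ (2 * γ / (γ - 1))) ^ ((γ - 1) / γ)

/-- `G_γ(y) := J_γ(y) / ∫₀¹ y² dx`. -/
def Gg (γ : ℝ) (p : (ℝ → ℝ) × (ℝ → ℝ)) : ℝ :=
  Jg γ p / ∫ t in (0:ℝ)..1, (p.1 t) ^ 2

/-!
Constant functions give `m_γ ≤ 1`, so the point is that `∫ y² ≤ ∫ (y'² + q y²)`. If `y` has a zero,
already `∫ y² ≤ ∫ y'²`. Otherwise take `y > 0` and put `s = π² - 2`, so that the hypothesis on `γ`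
reads `γ ≤ s / (s + 2)`. By Young's inequality `q^γ ≤ 1 + γ (q z² - z² + V_s(z))` with
`V_s(z) = z² + (2/s) z⁻ˢ - (1 + 2/s)`; applied to `z = t y` and integrated, this eliminates `q` and
reduces the claim to `∫ V_s(t y) ≤ ∫ (t y')²` for a single `t > 0` of our choice.

Choose `t` so that `V_s` takes the same value `e` at the minimum and at the maximum of `t y`. By the
Modica–Mortola inequality `∫ ((t y')² + e - V_s(t y))` is at least twice the action `∫ √(e - V_s)`
over the well `{V_s ≤ e}`, so an action of at least `e / 2` is needed. Since `V_s` lies below an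
isochronous potential of the same curvature at its minimum, its action is at least that of the
harmonic oscillator, which is exactly `e / 2`. The value of `s` comes from the linearisation
`V_s(y) ≈ (s + 2) (y - 1)²`, whose coefficient must not exceed the Neumann spectral gap `π²`.
-/

lemma absolutelyContinuousOnInterval_of_dist_le {X Y : Type*} [PseudoMetricSpace X]
    [PseudoMetricSpace Y] {f : ℝ → X} {g : ℝ → Y} {a b K : ℝ}
    (hf : AbsolutelyContinuousOnInterval f a b)
    (h : ∀ x ∈ uIcc a b, ∀ y ∈ uIcc a b, dist (g x) (g y) ≤ K * dist (f x) (f y)) :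
    AbsolutelyContinuousOnInterval g a b := by
  have hK := Filter.Tendsto.const_mul K hf
  rw [mul_zero] at hK
  refine squeeze_zero' (.of_forall fun _ => Finset.sum_nonneg fun _ _ => dist_nonneg) ?_ hK
  refine Filter.eventually_inf_principal.2 (.of_forall fun E hE => ?_)
  rw [Finset.mul_sum]
  exact Finset.sum_le_sum fun i hi => h _ (hE.1 i hi).1 _ (hE.1 i hi).2

section Substitution

variable {y y' f : ℝ → ℝ} {a b : ℝ}

lemma integral_comp_mul_deriv_of_continuous (hy : AbsolutelyContinuousOnInterval y a b)
    (hy' : ∀ᵐ x, x ∈ uIoc a b → HasDerivAt y (y' x) x) (hf : Continuous f) :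
    ∫ x in a..b, f (y x) * y' x = ∫ t in y a..y b, f t := by
  let F : ℝ → ℝ := fun z => ∫ t in (0 : ℝ)..z, f t
  have hF : ∀ z, HasDerivAt F (f z) z := fun z => hf.integral_hasStrictDerivAt 0 z |>.hasDerivAt
  have hF_C1 : ContDiff ℝ 1 F :=
    contDiff_one_iff_deriv.2 ⟨fun z => (hF z).differentiableAt, by
      rwa [funext fun z => (hF z).deriv]⟩
  have hFy : AbsolutelyContinuousOnInterval (F ∘ y) a b := by
    obtain ⟨K, hK⟩ := hF_C1.contDiffOn.exists_lipschitzOnWith one_ne_zero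
      (convex_Icc _ _) (isCompact_Icc (a := sInf (y '' uIcc a b)) (b := sSup (y '' uIcc a b)))
    rw [← hy.continuousOn.image_uIcc_eq_Icc] at hK
    exact absolutelyContinuousOnInterval_of_dist_le hy fun x hx z hz =>
      hK.dist_le_mul _ (mem_image_of_mem y hx) _ (mem_image_of_mem y hz)
  calc ∫ x in a..b, f (y x) * y' x = ∫ x in a..b, deriv (F ∘ y) x := by
        refine intervalIntegral.integral_congr_ae ?_
        filter_upwards [hy'] with x hx hxab
        exact ((hF (y x)).comp x (hx hxab)).deriv.symm
    _ = F (y b) - F (y a) := hFy.integral_deriv_eq_sub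
    _ = ∫ t in y a..y b, f t := intervalIntegral.integral_interval_sub_left
        (hf.intervalIntegrable _ _) (hf.intervalIntegrable _ _)

lemma integral_comp_mul_deriv_of_continuousOn (hy : AbsolutelyContinuousOnInterval y a b)
    (hy' : ∀ᵐ x, x ∈ uIoc a b → HasDerivAt y (y' x) x) (hf : ContinuousOn f (y '' uIcc a b)) :
    ∫ x in a..b, f (y x) * y' x = ∫ t in y a..y b, f t := by
  obtain ⟨g, hg⟩ := ContinuousMap.exists_restrict_eq
    (isCompact_uIcc.image_of_continuousOn hy.continuousOn).isClosed ⟨_, hf.domRestrict⟩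
  have hgf : ∀ z ∈ y '' uIcc a b, g z = f z := fun z hz => DFunLike.congr_fun hg ⟨z, hz⟩
  calc ∫ x in a..b, f (y x) * y' x = ∫ x in a..b, g (y x) * y' x :=
        intervalIntegral.integral_congr fun x hx => by
          simp only [hgf _ (mem_image_of_mem y hx)]
    _ = ∫ t in y a..y b, g t := integral_comp_mul_deriv_of_continuous hy hy' g.continuous
    _ = ∫ t in y a..y b, f t := intervalIntegral.integral_congr fun z hz =>
        hgf z (intermediate_value_uIcc hy.continuousOn hz)

end Substitution

section IntervalIntegral

variable {f g : ℝ → ℝ} {a b : ℝ}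

lemma abs_integral_le_integral_abs_of_mem_Icc {u v : ℝ} (hg : IntervalIntegrable g volume a b)
    (hu : u ∈ Icc a b) (hv : v ∈ Icc a b) : |∫ x in u..v, g x| ≤ ∫ x in a..b, |g x| := by
  rw [intervalIntegral.integral_of_le (hu.1.trans hu.2)]
  exact intervalIntegral.norm_integral_le_integral_norm_uIoc.trans <|
    setIntegral_mono_set hg.1.norm (.of_forall fun x => norm_nonneg _)
      (Ioc_subset_Ioc (le_min hu.1 hv.1) (max_le hu.2 hv.2)).eventuallyLE

lemma sq_integral_le_mul_integral_sq (hab : a ≤ b) (hg : IntervalIntegrable g volume a b)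
    (hg_sq : IntervalIntegrable (fun x => g x ^ 2) volume a b) :
    (∫ x in a..b, g x) ^ 2 ≤ (b - a) * ∫ x in a..b, g x ^ 2 := by
  have hquadratic : ∀ c : ℝ, 0 ≤ (b - a) * (c * c) + (-2 * ∫ x in a..b, g x) * c +
      ∫ x in a..b, g x ^ 2 := fun c =>
    calc 0 ≤ ∫ x in a..b, (g x - c) ^ 2 :=
          intervalIntegral.integral_nonneg hab fun x _ => sq_nonneg _
      _ = ∫ x in a..b, (g x ^ 2 - 2 * c * g x + c ^ 2) := by
          congr 1 with x
          ring
      _ = (b - a) * (c * c) + (-2 * ∫ x in a..b, g x) * c + ∫ x in a..b, g x ^ 2 := by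
          rw [intervalIntegral.integral_add (hg_sq.sub (hg.const_mul _)) intervalIntegrable_const,
            intervalIntegral.integral_sub hg_sq (hg.const_mul _),
            intervalIntegral.integral_const_mul, intervalIntegral.integral_const, smul_eq_mul]
          ring
  have hdiscrim := discrim_le_zero hquadratic
  rw [discrim] at hdiscrim
  linarith

lemma integral_eq_zero_of_odd (hodd : ∀ x, f (-x) = -f x) : ∫ x in -a..a, f x = 0 := by
  have h := intervalIntegral.integral_comp_neg (a := -a) (b := a) f
  simp only [hodd, intervalIntegral.integral_neg, neg_neg] at h
  linarith

lemma integral_sqrt_sq_sub_sq {r : ℝ} (hr : 0 ≤ r) :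
    ∫ x in -r..r, √(r ^ 2 - x ^ 2) = π * r ^ 2 / 2 := by
  have h := intervalIntegral.smul_integral_comp_mul_left (a := -1) (b := 1)
    (fun x => √(r ^ 2 - x ^ 2)) r
  have hscale : ∀ t : ℝ, √(r ^ 2 - (r * t) ^ 2) = r * √(1 - t ^ 2) := fun t => by
    rw [show r ^ 2 - (r * t) ^ 2 = r ^ 2 * (1 - t ^ 2) by ring,
      Real.sqrt_mul (sq_nonneg r), Real.sqrt_sq hr]
  simp only [hscale, intervalIntegral.integral_const_mul, integral_sqrt_one_sub_sq, mul_neg,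
    mul_one, smul_eq_mul] at h
  rw [← h]
  ring

end IntervalIntegral

section W12

variable {p : (ℝ → ℝ) × (ℝ → ℝ)}

lemma W12.absolutelyContinuousOnInterval (hp : p ∈ W12) :
    AbsolutelyContinuousOnInterval p.1 0 1 := by
  refine absolutelyContinuousOnInterval_of_dist_le (K := 1)
    (hp.2.1.absolutelyContinuousOnInterval_intervalIntegral left_mem_uIcc) fun x hx z hz => ?_
  rw [uIcc_of_le zero_le_one] at hx hz
  rw [hp.1 x hx, hp.1 z hz, dist_add_left, one_mul]

lemma W12.continuousOn (hp : p ∈ W12) : ContinuousOn p.1 (Icc 0 1) := by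
  simpa using (W12.absolutelyContinuousOnInterval hp).continuousOn

lemma W12.intervalIntegrable_comp (hp : p ∈ W12) {f : ℝ → ℝ}
    (hf : ContinuousOn f (p.1 '' Icc 0 1)) :
    IntervalIntegrable (fun x => f (p.1 x)) volume 0 1 :=
  ContinuousOn.intervalIntegrable_of_Icc zero_le_one
    (hf.comp (W12.continuousOn hp) (mapsTo_image _ _))

lemma W12.ae_hasDerivAt (hp : p ∈ W12) :
    ∀ᵐ x, x ∈ Ioo (0 : ℝ) 1 → HasDerivAt p.1 (p.2 x) x := by
  filter_upwards [hp.2.1.ae_hasDerivAt_integral] with x hx hx01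
  have hprim := (hx (by simpa using Ioo_subset_Icc_self hx01) 0 left_mem_uIcc).const_add (p.1 0)
  refine hprim.congr_of_eventuallyEq ?_
  filter_upwards [Icc_mem_nhds hx01.1 hx01.2] with z hz using hp.1 z hz

lemma W12.sub_eq_integral (hp : p ∈ W12) {u v : ℝ} (hu : u ∈ Icc (0 : ℝ) 1)
    (hv : v ∈ Icc (0 : ℝ) 1) : p.1 v - p.1 u = ∫ x in u..v, p.2 x := by
  have hint : ∀ x ∈ Icc (0 : ℝ) 1, IntervalIntegrable p.2 volume 0 x := fun x hx =>
    hp.2.1.mono_set (uIcc_subset_uIcc left_mem_uIcc (by simpa using hx))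
  rw [← intervalIntegral.integral_interval_sub_left (hint v hv) (hint u hu), hp.1 u hu,
    hp.1 v hv]
  ring

lemma W12.const_mul (hp : p ∈ W12) (c : ℝ) :
    ((fun x => c * p.1 x, fun x => c * p.2 x) : (ℝ → ℝ) × (ℝ → ℝ)) ∈ W12 := by
  refine ⟨fun x hx => ?_, hp.2.1.const_mul c, ?_⟩
  · simp only [intervalIntegral.integral_const_mul, hp.1 x hx, mul_add]
  · simpa only [mul_pow] using hp.2.2.const_mul (c ^ 2)

lemma W12.integral_le_integral_abs_comp_mul (hp : p ∈ W12) {u v : ℝ} (hu : u ∈ Icc (0 : ℝ) 1)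
    (hv : v ∈ Icc (0 : ℝ) 1) {f : ℝ → ℝ} (hf : ContinuousOn f (p.1 '' Icc 0 1)) :
    ∫ t in p.1 u..p.1 v, f t ≤ ∫ x in (0 : ℝ)..1, |f (p.1 x) * p.2 x| := by
  have huv : uIcc u v ⊆ Icc 0 1 := ordConnected_Icc.uIcc_subset hu hv
  have hderiv : ∀ᵐ x, x ∈ uIoc u v → HasDerivAt p.1 (p.2 x) x := by
    filter_upwards [W12.ae_hasDerivAt hp, Measure.ae_ne volume 0, Measure.ae_ne volume 1]
      with x hx hx0 hx1 hxuv
    have hx01 := huv (uIoc_subset_uIcc hxuv)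
    exact hx ⟨hx01.1.lt_of_ne' hx0, hx01.2.lt_of_ne hx1⟩
  have hint : IntervalIntegrable (fun x => f (p.1 x) * p.2 x) volume 0 1 :=
    hp.2.1.continuousOn_mul (by
      simpa using! hf.comp (W12.continuousOn hp) (mapsTo_image _ _))
  rw [← integral_comp_mul_deriv_of_continuousOn
    ((W12.absolutelyContinuousOnInterval hp).mono (by simpa using huv)) hderiv
    (hf.mono (image_mono huv))]
  exact (le_abs_self _).trans (abs_integral_le_integral_abs_of_mem_Icc hint hu hv)

/- The Modica–Mortola trick: `2 √W |y'| ≤ y'² + W`, and the left-hand side has the primitive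
of `√W` as a potential. -/
lemma W12.two_mul_integral_sqrt_le (hp : p ∈ W12) {u v : ℝ} (hu : u ∈ Icc (0 : ℝ) 1)
    (hv : v ∈ Icc (0 : ℝ) 1) {W : ℝ → ℝ} (hW : ContinuousOn W (p.1 '' Icc 0 1))
    (hW0 : ∀ x ∈ Icc (0 : ℝ) 1, 0 ≤ W (p.1 x)) :
    2 * ∫ t in p.1 u..p.1 v, √(W t) ≤ ∫ x in (0 : ℝ)..1, (p.2 x ^ 2 + W (p.1 x)) := by
  have hint : IntervalIntegrable (fun x => √(W (p.1 x)) * p.2 x) volume 0 1 :=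
    hp.2.1.continuousOn_mul (by
      simpa using! hW.sqrt.comp (W12.continuousOn hp) (mapsTo_image _ _))
  calc 2 * ∫ t in p.1 u..p.1 v, √(W t)
      ≤ 2 * ∫ x in (0 : ℝ)..1, |√(W (p.1 x)) * p.2 x| := by
        gcongr
        exact W12.integral_le_integral_abs_comp_mul hp hu hv hW.sqrt
    _ = ∫ x in (0 : ℝ)..1, 2 * |√(W (p.1 x)) * p.2 x| :=
        (intervalIntegral.integral_const_mul _ _).symm
    _ ≤ ∫ x in (0 : ℝ)..1, (p.2 x ^ 2 + W (p.1 x)) := by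
        refine intervalIntegral.integral_mono_on zero_le_one (hint.abs.const_mul 2)
          (hp.2.2.add (W12.intervalIntegrable_comp hp hW)) fun x hx => ?_
        rw [abs_mul, abs_of_nonneg (Real.sqrt_nonneg _)]
        linarith [sq_nonneg (√(W (p.1 x)) - |p.2 x|), sq_abs (p.2 x), Real.sq_sqrt (hW0 x hx)]

lemma W12.integral_sq_le_of_eq_zero (hp : p ∈ W12) {u : ℝ} (hu : u ∈ Icc (0 : ℝ) 1)
    (h0 : p.1 u = 0) : ∫ x in (0 : ℝ)..1, p.1 x ^ 2 ≤ ∫ x in (0 : ℝ)..1, p.2 x ^ 2 := by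
  set L := ∫ x in (0 : ℝ)..1, |p.2 x|
  have hbound : ∀ x ∈ Icc (0 : ℝ) 1, |p.1 x| ≤ L := fun x hx => by
    rw [← sub_zero (p.1 x), ← h0, W12.sub_eq_integral hp hu hx]
    exact abs_integral_le_integral_abs_of_mem_Icc hp.2.1 hu hx
  calc ∫ x in (0 : ℝ)..1, p.1 x ^ 2 ≤ ∫ _ in (0 : ℝ)..1, L ^ 2 :=
        intervalIntegral.integral_mono_on zero_le_one
          (W12.intervalIntegrable_comp hp (continuousOn_pow 2)) intervalIntegrable_const
          fun x hx => sq_le_sq' (abs_le.1 (hbound x hx)).1 (abs_le.1 (hbound x hx)).2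
    _ = L ^ 2 := by simp
    _ ≤ ∫ x in (0 : ℝ)..1, p.2 x ^ 2 := by
        simpa only [sq_abs, sub_zero, one_mul] using
          sq_integral_le_mul_integral_sq zero_le_one hp.2.1.abs
            (by simpa only [sq_abs] using hp.2.2)

end W12

section Potential

/-- The effective potential `V_s(y) = y² + (2/s) y⁻ˢ - (1 + 2/s)` left after the coefficient `q` has
been eliminated by Young's inequality. The additive constant makes its minimum `V_s(1) = 0`. -/
def potential (s y : ℝ) : ℝ := y ^ 2 + 2 / s * y ^ (-s) - (1 + 2 / s)

variable {s y a b : ℝ}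

lemma potential_one (s : ℝ) : potential s 1 = 0 := by simp [potential]

lemma rpow_le_one_add_mul_potential {γ q z : ℝ} (hs : 0 < s) (hγ : 0 ≤ γ) (hγs : γ ≤ s / (s + 2))
    (hq : 0 ≤ q) (hz : 0 < z) :
    q ^ γ ≤ 1 + γ * (q * z ^ 2 - z ^ 2 + potential s z) := by
  have hweight : 0 ≤ 1 - γ - 2 * γ / s := by
    rw [le_div_iff₀ (by positivity)] at hγs
    rw [sub_nonneg, div_le_iff₀ hs]
    linarith
  calc q ^ γ = (q * z ^ 2) ^ γ * (z ^ (-s)) ^ (2 * γ / s) * 1 ^ (1 - γ - 2 * γ / s) := by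
        rw [Real.one_rpow, mul_one, Real.mul_rpow hq (by positivity),
          ← Real.rpow_natCast_mul hz.le, ← Real.rpow_mul hz.le, mul_assoc, ← Real.rpow_add hz,
          show (2 : ℕ) * γ + -s * (2 * γ / s) = 0 by push_cast; field_simp; ring, Real.rpow_zero,
          mul_one]
    _ ≤ γ * (q * z ^ 2) + 2 * γ / s * z ^ (-s) + (1 - γ - 2 * γ / s) * 1 :=
        Real.geom_mean_le_arith_mean3_weighted hγ (by positivity) hweight (by positivity)
          (by positivity) zero_le_one (by ring)
    _ = 1 + γ * (q * z ^ 2 - z ^ 2 + potential s z) := by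
        unfold potential
        ring

lemma potential_nonneg (hs : 0 < s) (hy : 0 < y) : 0 ≤ potential s y := by
  have h := rpow_le_one_add_mul_potential hs (by positivity) le_rfl zero_le_one hy
  rw [Real.one_rpow, one_mul, sub_self, zero_add, le_add_iff_nonneg_right] at h
  exact nonneg_of_mul_nonneg_right h (by positivity)

lemma hasDerivAt_potential (hs : s ≠ 0) (hy : 0 < y) :
    HasDerivAt (potential s) (2 * y - 2 * y ^ (-(s + 1))) y := by
  have h := ((hasDerivAt_pow 2 y).add ((Real.hasDerivAt_rpow_const (p := -s)
    (.inl hy.ne')).const_mul (2 / s))).sub_const (1 + 2 / s)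
  refine h.congr_deriv ?_
  rw [neg_add']
  field_simp
  ring

lemma continuousOn_potential (s : ℝ) : ContinuousOn (potential s) (Ioi 0) :=
  ((continuousOn_pow 2).add ((continuousOn_id.rpow_const fun _ hy => .inl
    (mem_Ioi.1 hy).ne').const_mul _)).sub continuousOn_const

lemma strictConvexOn_potential (hs : 0 < s) : StrictConvexOn ℝ (Ioi 0) (potential s) := by
  refine StrictMonoOn.strictConvexOn_of_deriv (convex_Ioi 0) (continuousOn_potential s) ?_
  rw [interior_Ioi]
  intro x hx y hy hxy
  rw [(hasDerivAt_potential hs.ne' hx).deriv, (hasDerivAt_potential hs.ne' hy).deriv]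
  linarith [Real.rpow_lt_rpow_of_neg hx hxy (z := -(s + 1)) (by linarith)]

lemma exists_pos_potential_mul_eq (hs : 0 < s) (ha : 0 < a) (hab : a < b) :
    ∃ t > 0, potential s (t * a) = potential s (t * b) := by
  have hb : 0 < b := ha.trans hab
  have hpow : 0 < a ^ (-s) - b ^ (-s) :=
    sub_pos.2 (Real.rpow_lt_rpow_of_neg ha hab (by linarith))
  have hsq : 0 < b ^ 2 - a ^ 2 := by nlinarith
  -- The two values agree exactly when `t ^ (s + 2) = w`.
  set w := 2 / s * (a ^ (-s) - b ^ (-s)) / (b ^ 2 - a ^ 2) with hw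
  have hw_mul : w * (b ^ 2 - a ^ 2) = 2 / s * (a ^ (-s) - b ^ (-s)) := by
    rw [hw]
    field_simp
  obtain ⟨t, ht, htw⟩ : ∃ t > 0, t ^ (s + 2) = w :=
    ⟨w ^ (s + 2)⁻¹, by positivity, Real.rpow_inv_rpow (by positivity) (by positivity)⟩
  have ht_sq : t ^ 2 = w * t ^ (-s) := by
    rw [← htw, ← Real.rpow_add ht, ← Real.rpow_two]
    ring_nf
  refine ⟨t, ht, ?_⟩
  rw [potential, potential, Real.mul_rpow ht.le ha.le, Real.mul_rpow ht.le hb.le, mul_pow, mul_pow,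
    ht_sq]
  linear_combination (-t ^ (-s)) * hw_mul

end Potential

section Convex

variable {S : Set ℝ} {f : ℝ → ℝ} {a b x : ℝ}

lemma le_of_mem_Icc_of_convexOn (hf : ConvexOn ℝ S f) (ha : a ∈ S) (hb : b ∈ S) (hfab : f a = f b)
    (hx : x ∈ Icc a b) : f x ≤ f a := by
  simpa [← hfab] using
    hf.le_on_segment ha hb (by rwa [segment_eq_Icc (hx.1.trans hx.2)])

lemma mem_Icc_of_strictConvexOn (hf : StrictConvexOn ℝ S f) (ha : a ∈ S) (hb : b ∈ S)
    (hab : a < b) (hfab : f a = f b) (hx : x ∈ S) (hfx : f x ≤ f a) : x ∈ Icc a b := by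
  constructor
  · by_contra! hxa
    have h := hf.lt_on_openSegment hx hb (hxa.trans hab).ne
      (by rw [openSegment_eq_Ioo (hxa.trans hab)]; exact ⟨hxa, hab⟩)
    exact h.not_ge (max_le hfx hfab.ge)
  · by_contra! hbx
    have h := hf.lt_on_openSegment ha hx (hab.trans hbx).ne
      (by rw [openSegment_eq_Ioo (hab.trans hbx)]; exact ⟨hab, hbx⟩)
    rw [← hfab] at h
    exact h.not_ge (max_le le_rfl hfx)

lemma nonneg_of_hasDerivAt2_nonneg {f' f'' : ℝ → ℝ} (hS : IsOpen S) (hSc : Convex ℝ S)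
    (hf : ∀ x ∈ S, HasDerivAt f (f' x) x) (hf' : ∀ x ∈ S, HasDerivAt f' (f'' x) x)
    (hf'' : ∀ x ∈ S, 0 ≤ f'' x) (ha : a ∈ S) (hfa : f a = 0) (hf'a : f' a = 0) (hx : x ∈ S) :
    0 ≤ f x := by
  have hconvex : ConvexOn ℝ S f := by
    refine convexOn_of_hasDerivWithinAt2_nonneg (f' := f') (f'' := f'') hSc
      (fun z hz => (hf z hz).continuousAt.continuousWithinAt) ?_ ?_ ?_ <;> rw [hS.interior_eq]
    · exact fun z hz => (hf z hz).hasDerivWithinAt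
    · exact fun z hz => (hf' z hz).hasDerivWithinAt
    · exact hf''
  rw [← hfa]
  refine hconvex.isMinOn_of_rightDeriv_eq_zero (hS.interior_eq.symm ▸ ha) ?_ hx
  rw [(hf a ha).hasDerivWithinAt.derivWithin (uniqueDiffWithinAt_Ioi a), hf'a]

end Convex

section Comparison

variable {N θ : ℝ}

lemma one_add_sub_one_div_pos (hN : 1 ≤ N) (hθ : 0 < θ) : 0 < 1 + (θ - 1) / N := by
  have h : 0 < (N - 1 + θ) / N := div_pos (by linarith) (by linarith)
  refine h.trans_eq ?_
  field_simp
  ring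

lemma rpow_neg_le_inv_pow_four (hN : 1 ≤ N) (hθ : 0 < θ) :
    4 * N * (1 + (θ - 1) / N) ^ (-(3 * N + 1)) ≤ (N - 1) + (3 * N + 1) * (θ ^ 4)⁻¹ := by
  have hN0 : 0 < N := by linarith
  have hy := one_add_sub_one_div_pos hN hθ
  set y := 1 + (θ - 1) / N
  have hbernoulli : θ ≤ y ^ N := by
    have h := one_add_mul_self_le_rpow_one_add (s := (θ - 1) / N) (by linarith) hN
    rwa [mul_div_cancel₀ _ hN0.ne', add_sub_cancel] at h
  have hamgm : 1 ^ ((N - 1) / (4 * N)) * ((θ ^ 4)⁻¹) ^ ((3 * N + 1) / (4 * N)) ≤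
      (N - 1) / (4 * N) * 1 + (3 * N + 1) / (4 * N) * (θ ^ 4)⁻¹ :=
    Real.geom_mean_le_arith_mean2_weighted (div_nonneg (by linarith) (by positivity))
      (by positivity) zero_le_one (by positivity) (by field_simp; ring)
  calc 4 * N * y ^ (-(3 * N + 1)) = 4 * N * (y ^ N) ^ (-((3 * N + 1) / N)) := by
        rw [← Real.rpow_mul hy.le, mul_neg, mul_div_cancel₀ _ hN0.ne']
    _ ≤ 4 * N * θ ^ (-((3 * N + 1) / N)) := by
        gcongr 4 * N * ?_
        exact Real.rpow_le_rpow_of_nonpos hθ hbernoulli (neg_nonpos.2 (by positivity))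
    _ = 4 * N * (1 ^ ((N - 1) / (4 * N)) * ((θ ^ 4)⁻¹) ^ ((3 * N + 1) / (4 * N))) := by
        rw [Real.one_rpow, one_mul, Real.inv_rpow (by positivity), ← Real.rpow_natCast_mul hθ.le,
          ← Real.rpow_neg hθ.le]
        congr 3
        push_cast
        field_simp
    _ ≤ 4 * N * ((N - 1) / (4 * N) * 1 + (3 * N + 1) / (4 * N) * (θ ^ 4)⁻¹) := by gcongr
    _ = (N - 1) + (3 * N + 1) * (θ ^ 4)⁻¹ := by field_simp

lemma hasDerivAt_sub_inv_pow_three (hθ : θ ≠ 0) :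
    HasDerivAt (fun θ => θ - (θ ^ 3)⁻¹) (1 + 3 * (θ ^ 4)⁻¹) θ := by
  refine ((hasDerivAt_id θ).sub ((hasDerivAt_pow 3 θ).inv (pow_ne_zero 3 hθ))).congr_deriv ?_
  push_cast
  field_simp
  ring

lemma hasDerivAt_sub_inv_div_two_sq (hθ : θ ≠ 0) :
    HasDerivAt (fun θ => ((θ - θ⁻¹) / 2) ^ 2) ((θ - (θ ^ 3)⁻¹) / 2) θ := by
  refine ((((hasDerivAt_id θ).sub (hasDerivAt_inv hθ)).div_const 2).pow 2).congr_deriv ?_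
  simp only [Pi.sub_apply, id]
  push_cast
  field_simp
  ring

lemma hasDerivAt_one_add_sub_one_div (N θ : ℝ) :
    HasDerivAt (fun θ => 1 + (θ - 1) / N) N⁻¹ θ := by
  simpa using (((hasDerivAt_id θ).sub_const 1).div_const N).const_add 1

lemma hasDerivAt_potential_one_add_sub_one_div (hN : 1 ≤ N) (hθ : 0 < θ) :
    HasDerivAt (fun θ => potential (3 * N - 1) (1 + (θ - 1) / N))
      ((2 * (1 + (θ - 1) / N) - 2 * (1 + (θ - 1) / N) ^ (-(3 * N))) * N⁻¹) θ := by
  have h := (hasDerivAt_potential (s := 3 * N - 1) (by linarith)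
    (one_add_sub_one_div_pos hN hθ)).comp θ (hasDerivAt_one_add_sub_one_div N θ)
  rwa [sub_add_cancel] at h

lemma hasDerivAt_deriv_potential_one_add_sub_one_div (hN : 1 ≤ N) (hθ : 0 < θ) :
    HasDerivAt
      (fun θ => (2 * (1 + (θ - 1) / N) - 2 * (1 + (θ - 1) / N) ^ (-(3 * N))) * N⁻¹)
      ((2 + 6 * N * (1 + (θ - 1) / N) ^ (-(3 * N + 1))) / N ^ 2) θ := by
  have h := hasDerivAt_one_add_sub_one_div N θ
  refine (((h.const_mul 2).sub ((h.rpow_const (p := -(3 * N))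
    (.inl (one_add_sub_one_div_pos hN hθ).ne')).const_mul 2)).mul_const N⁻¹).congr_deriv ?_
  rw [neg_add']
  field_simp
  ring

lemma potential_one_add_sub_one_div_le (hN : 1 ≤ N) (hθ : 0 < θ) :
    potential (3 * N - 1) (1 + (θ - 1) / N) ≤ (3 * N + 1) / N ^ 2 * ((θ - θ⁻¹) / 2) ^ 2 := by
  let gap : ℝ → ℝ := fun θ =>
    (3 * N + 1) / N ^ 2 * ((θ - θ⁻¹) / 2) ^ 2 - potential (3 * N - 1) (1 + (θ - 1) / N)
  let gap' : ℝ → ℝ := fun θ => (3 * N + 1) / N ^ 2 * ((θ - (θ ^ 3)⁻¹) / 2) -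
    (2 * (1 + (θ - 1) / N) - 2 * (1 + (θ - 1) / N) ^ (-(3 * N))) * N⁻¹
  let gap'' : ℝ → ℝ := fun θ => (3 * N + 1) / N ^ 2 * ((1 + 3 * (θ ^ 4)⁻¹) / 2) -
    (2 + 6 * N * (1 + (θ - 1) / N) ^ (-(3 * N + 1))) / N ^ 2
  have hgap : ∀ θ > 0, HasDerivAt gap (gap' θ) θ := fun θ hθ =>
    ((hasDerivAt_sub_inv_div_two_sq hθ.ne').const_mul _).sub
      (hasDerivAt_potential_one_add_sub_one_div hN hθ)
  have hgap' : ∀ θ > 0, HasDerivAt gap' (gap'' θ) θ := fun θ hθ =>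
    (((hasDerivAt_sub_inv_pow_three hθ.ne').div_const 2).const_mul _).sub
      (hasDerivAt_deriv_potential_one_add_sub_one_div hN hθ)
  have hgap'' : ∀ θ > 0, 0 ≤ gap'' θ := fun θ hθ =>
    calc 0 ≤ 3 / (2 * N ^ 2) * ((N - 1) + (3 * N + 1) * (θ ^ 4)⁻¹ -
          4 * N * (1 + (θ - 1) / N) ^ (-(3 * N + 1))) :=
          mul_nonneg (by positivity) (sub_nonneg.2 (rpow_neg_le_inv_pow_four hN hθ))
      _ = gap'' θ := by
          simp only [gap'']
          ring
  have hgap_nonneg : 0 ≤ gap θ :=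
    nonneg_of_hasDerivAt2_nonneg isOpen_Ioi (convex_Ioi 0) hgap hgap' hgap''
      (mem_Ioi.2 one_pos) (by simp [gap, potential_one]) (by simp [gap']) (mem_Ioi.2 hθ)
  exact sub_nonneg.1 hgap_nonneg

end Comparison

section Action

/-- A parametrisation `x ↦ 1 + (exp (arsinh x) - 1) / N` of the half-line `y > 1 - 1 / N`.
Its inverse, squared and multiplied by `(3 N + 1) / N²`, is an isochronous potential which
dominates `potential (3 * N - 1)`. -/
def isochronousPath (N x : ℝ) : ℝ := 1 + (exp (arsinh x) - 1) / N

variable {N s a b e R : ℝ}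

lemma isochronousPath_pos (hN : 1 ≤ N) (x : ℝ) : 0 < isochronousPath N x :=
  one_add_sub_one_div_pos hN (exp_pos _)

lemma isochronousPath_monotone (hN : 0 ≤ N) : Monotone (isochronousPath N) := fun x z hxz => by
  unfold isochronousPath
  gcongr

/- The derivative is a constant plus an odd function, whence the isochrony. -/
lemma hasDerivAt_isochronousPath (N x : ℝ) :
    HasDerivAt (isochronousPath N) ((1 + x / √(1 + x ^ 2)) / N) x := by
  refine (((Real.hasDerivAt_arsinh x).exp.sub_const 1).div_const N).const_add 1 |>.congr_deriv ?_
  have : √(1 + x ^ 2) ≠ 0 := by positivity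
  rw [Real.exp_arsinh]
  field_simp
  ring

lemma potential_isochronousPath_le (hN : 1 ≤ N) (x : ℝ) :
    potential (3 * N - 1) (isochronousPath N x) ≤ (3 * N + 1) / N ^ 2 * x ^ 2 := by
  have h := potential_one_add_sub_one_div_le hN (exp_pos (arsinh x))
  rwa [← Real.exp_neg, ← Real.sinh_eq, Real.sinh_arsinh] at h

lemma integral_sqrt_mul_deriv_isochronousPath (N : ℝ) (hR : 0 ≤ R) :
    ∫ x in -R..R, √(R ^ 2 - x ^ 2) * ((1 + x / √(1 + x ^ 2)) / N) = π * R ^ 2 / (2 * N) := by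
  have hodd : ∫ x in -R..R, √(R ^ 2 - x ^ 2) * (x / √(1 + x ^ 2)) = 0 :=
    integral_eq_zero_of_odd fun x => by rw [neg_sq, neg_div, mul_neg]
  have hsqrt : Continuous fun x : ℝ => √(R ^ 2 - x ^ 2) := by fun_prop
  have hcont : Continuous fun x : ℝ => √(R ^ 2 - x ^ 2) * (x / √(1 + x ^ 2)) :=
    hsqrt.mul (continuous_id.div (by fun_prop) fun x => by positivity)
  calc ∫ x in -R..R, √(R ^ 2 - x ^ 2) * ((1 + x / √(1 + x ^ 2)) / N)
      = ∫ x in -R..R, (√(R ^ 2 - x ^ 2) + √(R ^ 2 - x ^ 2) * (x / √(1 + x ^ 2))) / N := by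
        simp only [← mul_div_assoc, mul_add, mul_one]
    _ = ((∫ x in -R..R, √(R ^ 2 - x ^ 2)) +
          ∫ x in -R..R, √(R ^ 2 - x ^ 2) * (x / √(1 + x ^ 2))) / N := by
        rw [intervalIntegral.integral_div, intervalIntegral.integral_add
          (hsqrt.intervalIntegrable _ _) (hcont.intervalIntegrable _ _)]
    _ = π * R ^ 2 / (2 * N) := by
        rw [hodd, integral_sqrt_sq_sub_sq hR]
        ring

lemma mul_le_integral_sqrt_sub_potential_isochronousPath {κ : ℝ} (hN : 1 ≤ N) (hR : 0 ≤ R)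
    (hκ : 0 ≤ κ) (hκN : κ ^ 2 = (3 * N + 1) / N ^ 2) :
    κ * (π * R ^ 2 / (2 * N)) ≤ ∫ y in isochronousPath N (-R)..isochronousPath N R,
      √(κ ^ 2 * R ^ 2 - potential (3 * N - 1) y) := by
  have hcont : Continuous fun x => potential (3 * N - 1) (isochronousPath N x) :=
    (continuousOn_potential _).comp_continuous
      (continuous_iff_continuousAt.2 fun x => (hasDerivAt_isochronousPath N x).continuousAt)
      (isochronousPath_pos hN)
  have hderiv_nonneg : ∀ x : ℝ, 0 ≤ (1 + x / √(1 + x ^ 2)) / N := fun x =>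
    (hasDerivAt_isochronousPath N x).deriv ▸
      (isochronousPath_monotone (zero_le_one.trans hN)).deriv_nonneg
  have hderiv_cont : Continuous fun x : ℝ => (1 + x / √(1 + x ^ 2)) / N :=
    ((continuous_id.div (by fun_prop) fun x => by positivity).const_add 1).div_const N
  rw [← integral_sqrt_mul_deriv_isochronousPath N hR, ← intervalIntegral.integral_const_mul,
    ← intervalIntegral.integral_comp_mul_deriv_of_deriv_nonneg
      (fun x _ => (hasDerivAt_isochronousPath N x).continuousAt.continuousWithinAt)
      (fun x _ => hasDerivAt_isochronousPath N x) (fun x _ => hderiv_nonneg x)]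
  refine intervalIntegral.integral_mono_on (by linarith)
    (Continuous.intervalIntegrable (by fun_prop) _ _)
    (Continuous.intervalIntegrable (by fun_prop) _ _) fun x _ => ?_
  rw [← mul_assoc]
  refine mul_le_mul_of_nonneg_right ?_ (hderiv_nonneg x)
  calc κ * √(R ^ 2 - x ^ 2) = √(κ ^ 2 * R ^ 2 - κ ^ 2 * x ^ 2) := by
        rw [← mul_sub, Real.sqrt_mul (sq_nonneg κ), Real.sqrt_sq hκ]
    _ ≤ √(κ ^ 2 * R ^ 2 - potential (3 * N - 1) (isochronousPath N x)) := by
        gcongr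
        exact (potential_isochronousPath_le hN x).trans_eq (by rw [hκN])

lemma pi_mul_div_le_integral_sqrt_sub_potential (hs : 2 ≤ s) (ha : 0 < a) (hab : a < b)
    (hea : potential s a = e) (heb : potential s b = e) :
    π * e / (2 * √(s + 2)) ≤ ∫ y in a..b, √(e - potential s y) := by
  obtain ⟨N, rfl⟩ : ∃ N, s = 3 * N - 1 := ⟨(s + 1) / 3, by ring⟩
  have hN : 1 ≤ N := by linarith
  have hN0 : 0 < N := by linarith
  have he : 0 ≤ e := hea ▸ potential_nonneg (by linarith) ha
  set κ := √(3 * N + 1) / N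
  have hκ : 0 < κ := by positivity
  have hκ_sq : κ ^ 2 = (3 * N + 1) / N ^ 2 := by
    rw [div_pow, Real.sq_sqrt (by linarith)]
  set R := √e / κ
  have hR : 0 ≤ R := by positivity
  have he_eq : e = κ ^ 2 * R ^ 2 := by
    rw [← mul_pow, mul_div_cancel₀ _ hκ.ne', Real.sq_sqrt he]
  have hmem : ∀ x, x ^ 2 = R ^ 2 → isochronousPath N x ∈ Icc a b := fun x hx =>
    mem_Icc_of_strictConvexOn (strictConvexOn_potential (by linarith)) ha (ha.trans hab) hab
      (hea.trans heb.symm) (isochronousPath_pos hN x)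
      ((potential_isochronousPath_le hN x).trans_eq (by rw [hx, hea, he_eq, hκ_sq]))
  calc π * e / (2 * √(3 * N - 1 + 2)) = κ * (π * R ^ 2 / (2 * N)) := by
        rw [he_eq, show 3 * N - 1 + 2 = 3 * N + 1 by ring]
        simp only [κ]
        field_simp
    _ ≤ ∫ y in isochronousPath N (-R)..isochronousPath N R, √(e - potential (3 * N - 1) y) := by
        rw [he_eq]
        exact mul_le_integral_sqrt_sub_potential_isochronousPath hN hR hκ.le hκ_sq
    _ ≤ ∫ y in a..b, √(e - potential (3 * N - 1) y) :=
        intervalIntegral.integral_mono_interval (hmem _ (neg_sq R)).1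
          (isochronousPath_monotone hN0.le (by linarith)) (hmem _ rfl).2
          (.of_forall fun _ => Real.sqrt_nonneg _)
          (ContinuousOn.intervalIntegrable_of_Icc hab.le
            (continuousOn_const.sub ((continuousOn_potential _).mono
              fun y hy => ha.trans_le hy.1)).sqrt)

end Action

section PositiveFunctions

variable {p : (ℝ → ℝ) × (ℝ → ℝ)} {s : ℝ}

lemma W12.intervalIntegrable_potential (hp : p ∈ W12) (hpos : ∀ x ∈ Icc (0 : ℝ) 1, 0 < p.1 x)
    (s : ℝ) : IntervalIntegrable (fun x => potential s (p.1 x)) volume 0 1 :=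
  W12.intervalIntegrable_comp hp ((continuousOn_potential s).mono (image_subset_iff.2 hpos))

lemma W12.integral_potential_le_of_potential_eq (hp : p ∈ W12) (hs : 2 ≤ s) {u v : ℝ}
    (hpos : ∀ x ∈ Icc (0 : ℝ) 1, 0 < p.1 x) (hu : u ∈ Icc (0 : ℝ) 1) (hv : v ∈ Icc (0 : ℝ) 1)
    (hrange : ∀ x ∈ Icc (0 : ℝ) 1, p.1 x ∈ Icc (p.1 u) (p.1 v)) (huv : p.1 u < p.1 v)
    (hpot : potential s (p.1 u) = potential s (p.1 v)) :
    ∫ x in (0 : ℝ)..1, potential s (p.1 x) ≤ (s + 2) / π ^ 2 * ∫ x in (0 : ℝ)..1, p.2 x ^ 2 := by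
  set e := potential s (p.1 u)
  set k := (s + 2) / π ^ 2
  have hk : 0 < k := by positivity
  have hle : ∀ x ∈ Icc (0 : ℝ) 1, potential s (p.1 x) ≤ e := fun x hx =>
    le_of_mem_Icc_of_convexOn (strictConvexOn_potential (by linarith)).convexOn (hpos u hu)
      (hpos v hv) hpot (hrange x hx)
  have hcont : ContinuousOn (fun y => (e - potential s y) / k) (p.1 '' Icc 0 1) :=
    (continuousOn_const.sub ((continuousOn_potential s).mono
      (image_subset_iff.2 hpos))).div_const k
  have hint := W12.intervalIntegrable_potential hp hpos s
  have hint_sub := (intervalIntegrable_const (c := e)).sub hint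
  have haction : e / k ≤ (∫ x in (0 : ℝ)..1, p.2 x ^ 2) +
      (e - ∫ x in (0 : ℝ)..1, potential s (p.1 x)) / k :=
    calc e / k = 2 * (π * e / (2 * √(s + 2)) / √k) := by
          rw [Real.sqrt_div (by linarith), Real.sqrt_sq pi_pos.le]
          simp only [k]
          field_simp
          rw [Real.sq_sqrt (by linarith)]
      _ ≤ 2 * ((∫ y in p.1 u..p.1 v, √(e - potential s y)) / √k) := by
          gcongr
          exact pi_mul_div_le_integral_sqrt_sub_potential hs (hpos u hu) huv rfl hpot.symm
      _ = 2 * ∫ y in p.1 u..p.1 v, √((e - potential s y) / k) := by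
          simp only [Real.sqrt_div' _ hk.le, intervalIntegral.integral_div]
      _ ≤ ∫ x in (0 : ℝ)..1, (p.2 x ^ 2 + (e - potential s (p.1 x)) / k) :=
          W12.two_mul_integral_sqrt_le hp hu hv hcont fun x hx =>
            div_nonneg (sub_nonneg.2 (hle x hx)) hk.le
      _ = (∫ x in (0 : ℝ)..1, p.2 x ^ 2) + (e - ∫ x in (0 : ℝ)..1, potential s (p.1 x)) / k := by
          rw [intervalIntegral.integral_add hp.2.2 (hint_sub.div_const k),
            intervalIntegral.integral_div,
            intervalIntegral.integral_sub intervalIntegrable_const hint,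
            intervalIntegral.integral_const, sub_zero, one_smul]
  rw [sub_div] at haction
  rw [← div_le_iff₀' hk]
  linarith

lemma W12.exists_pos_integral_potential_le (hp : p ∈ W12) (hs : 2 ≤ s)
    (hpos : ∀ x ∈ Icc (0 : ℝ) 1, 0 < p.1 x) :
    ∃ t > 0, ∫ x in (0 : ℝ)..1, potential s (t * p.1 x) ≤
      (s + 2) / π ^ 2 * ∫ x in (0 : ℝ)..1, (t * p.2 x) ^ 2 := by
  have hne : (Icc (0 : ℝ) 1).Nonempty := nonempty_Icc.2 zero_le_one
  obtain ⟨u, hu, hmin⟩ := isCompact_Icc.exists_isMinOn hne (W12.continuousOn hp)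
  obtain ⟨v, hv, hmax⟩ := isCompact_Icc.exists_isMaxOn hne (W12.continuousOn hp)
  have hrange : ∀ x ∈ Icc (0 : ℝ) 1, p.1 x ∈ Icc (p.1 u) (p.1 v) := fun x hx =>
    ⟨hmin hx, hmax hx⟩
  rcases (hrange v hv).1.eq_or_lt with huv | huv
  · refine ⟨(p.1 u)⁻¹, inv_pos.2 (hpos u hu), ?_⟩
    have hzero : ∫ x in (0 : ℝ)..1, potential s ((p.1 u)⁻¹ * p.1 x) = 0 := by
      refine (intervalIntegral.integral_congr (g := fun _ => 0) fun x hx => ?_).trans (by simp)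
      obtain ⟨hxu, hxv⟩ := hrange x (by simpa using hx)
      simp [(hxv.trans_eq huv.symm).antisymm hxu, (hpos u hu).ne', potential_one]
    rw [hzero]
    exact mul_nonneg (by positivity)
      (intervalIntegral.integral_nonneg zero_le_one fun x _ => sq_nonneg _)
  · obtain ⟨t, ht, hpot⟩ := exists_pos_potential_mul_eq (s := s) (by linarith) (hpos u hu) huv
    exact ⟨t, ht, W12.integral_potential_le_of_potential_eq (W12.const_mul hp t) hs
      (fun x hx => mul_pos ht (hpos x hx)) hu hv
      (fun x hx => ⟨mul_le_mul_of_nonneg_left (hrange x hx).1 ht.le,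
        mul_le_mul_of_nonneg_left (hrange x hx).2 ht.le⟩)
      (mul_lt_mul_of_pos_left huv ht) hpot⟩

end PositiveFunctions

section Rayleigh

variable {γ : ℝ} {q : ℝ → ℝ} {p : (ℝ → ℝ) × (ℝ → ℝ)}

lemma Agamma.intervalIntegrable_mul_sq (hq : q ∈ Agamma γ) (hp : p ∈ W12) :
    IntervalIntegrable (fun x => q x * p.1 x ^ 2) volume 0 1 :=
  hq.1.mul_continuousOn (by simpa using! (W12.continuousOn hp).pow 2)

lemma Agamma.integral_sub_le_integral_potential {s : ℝ} (hs : 0 < s) (hγ : 0 < γ)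
    (hγs : γ ≤ s / (s + 2)) (hq : q ∈ Agamma γ) (hp : p ∈ W12)
    (hpos : ∀ x ∈ Icc (0 : ℝ) 1, 0 < p.1 x) :
    (∫ x in (0 : ℝ)..1, p.1 x ^ 2) - ∫ x in (0 : ℝ)..1, q x * p.1 x ^ 2 ≤
      ∫ x in (0 : ℝ)..1, potential s (p.1 x) := by
  have hqγ : IntervalIntegrable (fun x => q x ^ γ) volume 0 1 :=
    intervalIntegral.intervalIntegrable_of_integral_ne_zero (by rw [hq.2.2]; exact one_ne_zero)
  have hqy := Agamma.intervalIntegrable_mul_sq hq hp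
  have hy := W12.intervalIntegrable_comp hp (continuousOn_pow 2)
  have hV := W12.intervalIntegrable_potential hp hpos s
  have hint := ((hqy.sub hy).add hV).const_mul γ
  have hyoung : ∫ x in (0 : ℝ)..1, q x ^ γ ≤ ∫ x in (0 : ℝ)..1,
      (1 + γ * (q x * p.1 x ^ 2 - p.1 x ^ 2 + potential s (p.1 x))) := by
    refine intervalIntegral.integral_mono_ae_restrict zero_le_one hqγ
      (intervalIntegrable_const.add hint) ?_
    filter_upwards [hq.2.1, ae_restrict_mem measurableSet_Icc] with x hqx hx
    exact rpow_le_one_add_mul_potential hs hγ.le hγs hqx (hpos x hx)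
  rw [hq.2.2, intervalIntegral.integral_add intervalIntegrable_const hint,
    intervalIntegral.integral_const_mul, intervalIntegral.integral_add (hqy.sub hy) hV,
    intervalIntegral.integral_sub hqy hy, intervalIntegral.integral_const, sub_zero, one_smul,
    le_add_iff_nonneg_right] at hyoung
  linarith [nonneg_of_mul_nonneg_right hyoung hγ]

lemma integral_sq_le_of_pos (hγ : γ ∈ Ioc (0 : ℝ) (1 - 2 / π ^ 2)) (hq : q ∈ Agamma γ)
    (hp : p ∈ W12) (hpos : ∀ x ∈ Icc (0 : ℝ) 1, 0 < p.1 x) :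
    ∫ x in (0 : ℝ)..1, p.1 x ^ 2 ≤ ∫ x in (0 : ℝ)..1, (p.2 x ^ 2 + q x * p.1 x ^ 2) := by
  have hs : 2 ≤ π ^ 2 - 2 := by nlinarith [Real.pi_gt_three]
  have hγs : γ ≤ (π ^ 2 - 2) / (π ^ 2 - 2 + 2) :=
    hγ.2.trans_eq (by rw [sub_add_cancel]; field_simp)
  obtain ⟨t, ht, hpot⟩ := W12.exists_pos_integral_potential_le hp hs hpos
  have hyoung := Agamma.integral_sub_le_integral_potential (by linarith) hγ.1 hγs hq
    (W12.const_mul hp t) fun x hx => mul_pos ht (hpos x hx)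
  have hscale := hyoung.trans hpot
  rw [sub_add_cancel, div_self (by positivity), one_mul] at hscale
  simp only [mul_pow, mul_left_comm (q _), intervalIntegral.integral_const_mul,
    ← mul_sub] at hscale
  rw [intervalIntegral.integral_add hp.2.2 (Agamma.intervalIntegrable_mul_sq hq hp)]
  linarith [le_of_mul_le_mul_left hscale (pow_pos ht 2)]

lemma pos_of_continuousOn_Icc_of_ne_zero {y : ℝ → ℝ} {a b : ℝ} (hy : ContinuousOn y (Icc a b))
    (hne : ∀ x ∈ Icc a b, y x ≠ 0) (ha : 0 < y a) : ∀ x ∈ Icc a b, 0 < y x := by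
  intro x hx
  by_contra! hyx
  obtain ⟨z, hz, hyz⟩ := intermediate_value_Icc' hx.1 (hy.mono (Icc_subset_Icc_right hx.2))
    ⟨hyx, ha.le⟩
  exact hne z (Icc_subset_Icc_right hx.2 hz) hyz

lemma integral_sq_le (hγ : γ ∈ Ioc (0 : ℝ) (1 - 2 / π ^ 2)) (hq : q ∈ Agamma γ) (hp : p ∈ W12) :
    ∫ x in (0 : ℝ)..1, p.1 x ^ 2 ≤ ∫ x in (0 : ℝ)..1, (p.2 x ^ 2 + q x * p.1 x ^ 2) := by
  by_cases! hzero : ∃ u ∈ Icc (0 : ℝ) 1, p.1 u = 0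
  · obtain ⟨u, hu, hpu⟩ := hzero
    have hqy : 0 ≤ ∫ x in (0 : ℝ)..1, q x * p.1 x ^ 2 := by
      refine intervalIntegral.integral_nonneg_of_ae_restrict zero_le_one ?_
      filter_upwards [hq.2.1] with x hqx
      exact mul_nonneg hqx (sq_nonneg _)
    rw [intervalIntegral.integral_add hp.2.2 (Agamma.intervalIntegrable_mul_sq hq hp)]
    linarith [W12.integral_sq_le_of_eq_zero hp hu hpu]
  · rcases (hzero 0 (by simp)).lt_or_gt with hneg | hpos
    · have hp' := W12.const_mul hp (-1)
      simpa using integral_sq_le_of_pos hγ hq hp' <|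
        pos_of_continuousOn_Icc_of_ne_zero (W12.continuousOn hp')
          (fun x hx => by simpa using hzero x hx) (by simpa using hneg)
    · exact integral_sq_le_of_pos hγ hq hp
        (pos_of_continuousOn_Icc_of_ne_zero (W12.continuousOn hp) hzero hpos)

lemma one_mem_W12 : ((fun _ => 1, fun _ => 0) : (ℝ → ℝ) × (ℝ → ℝ)) ∈ W12 := by
  simp [W12]

lemma one_mem_Agamma (γ : ℝ) : (fun _ => 1) ∈ Agamma γ := by
  simp [Agamma]

lemma le_lambda1 {c : ℝ} (h : ∀ p ∈ W12, c * ∫ x in (0 : ℝ)..1, p.1 x ^ 2 ≤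
    ∫ x in (0 : ℝ)..1, (p.2 x ^ 2 + q x * p.1 x ^ 2)) : c ≤ lambda1 q := by
  refine le_csInf ⟨_, _, one_mem_W12, by simp, rfl⟩ ?_
  rintro _ ⟨p, hp, hpos, rfl⟩
  exact (le_div_iff₀ hpos).2 (h p hp)

lemma lambda1_one : lambda1 (fun _ => 1) = 1 := by
  have hle : ∀ p ∈ W12, ∫ x in (0 : ℝ)..1, p.1 x ^ 2 ≤
      ∫ x in (0 : ℝ)..1, (p.2 x ^ 2 + 1 * p.1 x ^ 2) := fun p hp => by
    have hy := W12.intervalIntegrable_comp hp (continuousOn_pow 2)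
    refine intervalIntegral.integral_mono_on zero_le_one hy
      (hp.2.2.add (by simpa using hy)) fun x _ => ?_
    linarith [sq_nonneg (p.2 x)]
  refine le_antisymm (csInf_le ⟨1, ?_⟩ ⟨_, one_mem_W12, by simp, by simp [Rayleigh]⟩)
    (le_lambda1 fun p hp => by simpa using hle p hp)
  rintro _ ⟨p, hp, hpos, rfl⟩
  exact (one_le_div hpos).2 (hle p hp)

end Rayleigh

/-- For every `γ ∈ (0, 1 − 2π⁻²]` one has `m_γ = 1`. -/
theorem mGamma_eq_one (γ : ℝ) (hγ : γ ∈ Ioc (0:ℝ) (1 - 2 / π ^ 2)) :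
    mGamma γ = 1 := by
  have hattained : 1 ∈ lambda1 '' Agamma γ := ⟨_, one_mem_Agamma γ, lambda1_one⟩
  have hlower : 1 ∈ lowerBounds (lambda1 '' Agamma γ) := forall_mem_image.2 fun q hq =>
    le_lambda1 fun p hp => by simpa using integral_sq_le hγ hq hp
  exact IsLeast.csInf_eq ⟨hattained, hlower⟩
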